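/- Let 𝒜 and ℬ be AD-families on ℕ such that the filters F_𝒜 and F_ℬ are FU-filters. If F_ℬ is an α₄-filter and F_𝒜 ≤_RK F_ℬ, then F_𝒜 is an α₄-filter. -/

import Mathlib

open Set

/-- `f[G] = {A : f⁻¹(A) ∈ G}`, the image (Rudin–Keisler) filter of a family of sets. -/
def mapFilter {α β : Type*} (f : α → β) (G : Set (Set α)) : Set (Set β) := {A | f ⁻¹' A ∈ G}

/-- `F` is a (proper) filter of subsets. -/
def IsFilterFam {α : Type*} (F : Set (Set α)) : Prop :=
  Set.univ ∈ F ∧ (∀ A ∈ F, ∀ B : Set α, A ⊆ B → B ∈ F) ∧ (∀ A ∈ F, ∀ B ∈ F, A ∩ B ∈ F)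

/-- A free filter: a proper filter containing all cofinite sets. -/
def IsFreeFilter {α : Type*} (F : Set (Set α)) : Prop :=
  IsFilterFam F ∧ (∀ A : Set α, Aᶜ.Finite → A ∈ F) ∧ ∅ ∉ F

/-- `S → F` : `S` is an infinite set converging to the filter `F`, i.e. `S ⊆* A` for all `A ∈ F`. -/
def ConvTo {α : Type*} (S : Set α) (F : Set (Set α)) : Prop :=
  S.Infinite ∧ ∀ A ∈ F, (S \ A).Finite

/-- `F` is relatively equivalent to the Fréchet filter: some `A ∈ F` converges to `F`. -/
def RelFrechet {α : Type*} (F : Set (Set α)) : Prop := ∃ A ∈ F, ConvTo A F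

/-- Rudin–Keisler order: `F ≤_RK G` iff `f[G] = F` for some surjection `f`. -/
def RKle {α : Type*} (F G : Set (Set α)) : Prop :=
  ∃ f : α → α, Function.Surjective f ∧ mapFilter f G = F

/-- `F ≈ G` : there is a bijection `f` with `f[F] = G`. -/
def EquivFilter {α : Type*} (F G : Set (Set α)) : Prop :=
  ∃ f : α → α, Function.Bijective f ∧ mapFilter f F = G

/-- `F <_RK G` : `F ≤_RK G` and `¬ (F ≈ G)`. -/
def RKlt {α : Type*} (F G : Set (Set α)) : Prop := RKle F G ∧ ¬ EquivFilter F G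

/-- An AD-family: an infinite family of infinite sets with pairwise finite intersections. -/
def IsADFamily {α : Type*} (𝒜 : Set (Set α)) : Prop :=
  𝒜.Infinite ∧ (∀ A ∈ 𝒜, A.Infinite) ∧ ∀ A ∈ 𝒜, ∀ B ∈ 𝒜, A ≠ B → (A ∩ B).Finite

/-- The ideal generated by a family `𝒜`: sets almost covered by finitely many members of `𝒜`. -/
def idealGen {α : Type*} (𝒜 : Set (Set α)) : Set (Set α) :=
  {X | ∃ 𝒜' : Finset (Set α), ↑𝒜' ⊆ 𝒜 ∧ (X \ ⋃₀ ↑𝒜').Finite}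

/-- `S_𝒜`: the filter dual to the ideal generated by `𝒜`. -/
def SFam {α : Type*} (𝒜 : Set (Set α)) : Set (Set α) := {F | Fᶜ ∈ idealGen 𝒜}

/-- `F_𝒟 = {F : D ⊆* F for every D ∈ 𝒟}`. -/
def FFam {α : Type*} (𝒟 : Set (Set α)) : Set (Set α) := {F | ∀ D ∈ 𝒟, (D \ F).Finite}

/-- A nowhere MAD family: every set outside the generated ideal contains an infinite set
almost disjoint from every member of `𝒜`. -/
def IsNMAD {α : Type*} (𝒜 : Set (Set α)) : Prop :=
  IsADFamily 𝒜 ∧ ∀ X : Set α, X ∉ idealGen 𝒜 →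
    ∃ B ⊆ X, B.Infinite ∧ ∀ A ∈ 𝒜, (B ∩ A).Finite

/-- A partition of `ℕ` into infinitely many infinite sets. -/
def IsInfPartition (𝒬 : Set (Set ℕ)) : Prop :=
  𝒬.Infinite ∧ (∀ P ∈ 𝒬, P.Infinite) ∧ ⋃₀ 𝒬 = Set.univ ∧
    ∀ P ∈ 𝒬, ∀ Q ∈ 𝒬, P ≠ Q → P ∩ Q = ∅

/-- `F` is a Fréchet–Urysohn filter: every `F`-positive set contains a sequence converging to `F`. -/
def IsFUFilter {α : Type*} (F : Set (Set α)) : Prop :=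
  ∀ A : Set α, Aᶜ ∉ F → ∃ S ⊆ A, ConvTo S F

/-- The trace filter `F|_A = {G ∩ A : G ∈ F}`. -/
def traceFam {α : Type*} (F : Set (Set α)) (A : Set α) : Set (Set α) := {S | ∃ G ∈ F, S = G ∩ A}

/-- Todorčević–Uzcátegui order: there are `A ∈ G⁺`, `B ∈ F` and a bijection `f : A → B`
with `f[G|_A] = F|_B`. -/
def TUle {α : Type*} (F G : Set (Set α)) : Prop :=
  ∃ A : Set α, Aᶜ ∉ G ∧ ∃ B ∈ F, ∃ f : α → α, Set.BijOn f A B ∧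
    {Y : Set α | Y ⊆ B ∧ A ∩ f ⁻¹' Y ∈ traceFam G A} = traceFam F B

/-- An α₄-filter: for every sheaf there is a convergent set meeting infinitely many members. -/
def Alpha4 (F : Set (Set ℕ)) : Prop :=
  ∀ C : ℕ → Set ℕ, (∀ n, ConvTo (C n) F) →
    ∃ B : Set ℕ, ConvTo B F ∧ {n : ℕ | (C n ∩ B).Nonempty}.Infinite

/-!
The FU property of `G` lifts each sequence converging to `f[G]` to a sequence inside its preimage
converging to `G`. If the `α₄` property of `G`, applied to the lifts of `C n`, yields `B`, then
`f '' B` meets infinitely many `C n`. It can fail to converge to `f[G]` only by being finite, which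
is excluded by first deleting `0, …, n` from `C n`: then every point lies in only finitely many
of the sets.
-/

section Convergence

variable {α β : Type*} {S T : Set α}

theorem ConvTo.compl_notMem {F : Set (Set α)} (hS : ConvTo S F) : Sᶜ ∉ F := fun hmem =>
  hS.1 <| by simpa only [sdiff_compl, inter_self] using hS.2 Sᶜ hmem

theorem ConvTo.sdiff {F : Set (Set α)} (hS : ConvTo S F) (hT : T.Finite) :
    ConvTo (S \ T) F :=
  ⟨hS.1.sdiff hT, fun A hA => (hS.2 A hA).subset (sdiff_subset_sdiff_left sdiff_subset)⟩

theorem ConvTo.image {G : Set (Set α)} {f : α → β} (hS : ConvTo S G)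
    (hfS : (f '' S).Infinite) : ConvTo (f '' S) (mapFilter f G) := by
  refine ⟨hfS, fun A hA => ?_⟩
  rw [← image_sdiff_preimage]
  exact (hS.2 (f ⁻¹' A) hA).image f

theorem IsFUFilter.exists_convTo_subset_preimage {G : Set (Set α)} (hG : IsFUFilter G)
    {f : α → β} {C : Set β} (hC : ConvTo C (mapFilter f G)) : ∃ S ⊆ f ⁻¹' C, ConvTo S G :=
  hG (f ⁻¹' C) hC.compl_notMem

end Convergence

theorem infinite_of_infinite_setOf_inter_nonempty {ι α : Type*} {C : ι → Set α} {B : Set α}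
    (hC : ∀ x, {i | x ∈ C i}.Finite) (hB : {i | (C i ∩ B).Nonempty}.Infinite) :
    B.Infinite := by
  intro hfin
  refine hB ((hfin.biUnion fun x _ => hC x).subset ?_)
  rintro i ⟨x, hxC, hxB⟩
  exact mem_biUnion hxB hxC

theorem finite_setOf_mem_sdiff_Iic {α : Type*} [LinearOrder α] [LocallyFiniteOrderBot α]
    (C : α → Set α) (x : α) : {a | x ∈ C a \ Iic a}.Finite :=
  (finite_Iio x).subset fun _ hn => notMem_Iic.mp hn.2

theorem statement16_general {G : Set (Set ℕ)} (hFU : IsFUFilter G) (hα : Alpha4 G)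
    (f : ℕ → ℕ) : Alpha4 (mapFilter f G) := by
  intro C hC
  have hlift (n : ℕ) : ∃ S ⊆ f ⁻¹' (C n \ Iic n), ConvTo S G :=
    hFU.exists_convTo_subset_preimage ((hC n).sdiff (finite_Iic n))
  choose S hSC hSG using hlift
  obtain ⟨B, hBG, hSB⟩ := hα S hSG
  have hmeet : {n | ((C n \ Iic n) ∩ f '' B).Nonempty}.Infinite := by
    refine hSB.mono ?_
    rintro n ⟨x, hxS, hxB⟩
    exact ⟨f x, hSC n hxS, mem_image_of_mem f hxB⟩
  have hfB : (f '' B).Infinite :=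
    infinite_of_infinite_setOf_inter_nonempty (finite_setOf_mem_sdiff_Iic C) hmeet
  exact ⟨f '' B, hBG.image hfB,
    hmeet.mono fun _ hn => hn.mono (inter_subset_inter_left _ sdiff_subset)⟩

/-- The α₄ property is downward preserved by the RK-order among FU-filters. -/
theorem statement16 (𝒜 ℬ : Set (Set ℕ)) (h𝒜 : IsADFamily 𝒜) (hℬ : IsADFamily ℬ)
    (hFU𝒜 : IsFUFilter (FFam 𝒜)) (hFUℬ : IsFUFilter (FFam ℬ))
    (hα : Alpha4 (FFam ℬ)) (h : RKle (FFam 𝒜) (FFam ℬ)) : Alpha4 (FFam 𝒜) := by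
  obtain ⟨f, -, hf⟩ := h
  exact hf ▸ statement16_general hFUℬ hα f
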